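/- Let x(t) = Σ_{k=1}^K A_k(t) e^{2πi φ_k(t)} belong to the class 𝒟_{ε₁,ε₂} and let g, σ, Ṽ_x be as in the context. Then for all (t,η), |Ṽ_x(t,η) − Σ_{k=1}^K x_k(t) ĝ(σ(t)(η − φ'_k(t)))| ≤ σ(t) Λ₀(t), where Λ₀(t) = K ε₁ I₁ + π ε₂ I₂ σ(t) Σ_{k=1}^K A_k(t) and I_n = ∫_ℝ |τ^n g(τ)| dτ. -/

import Mathlib

/-!
After the substitution `τ = σ(t) u`, the difference of the adaptive STFT and its first-order
approximation is the integral of `g(u) e^{-2πi η σ(t) u}` against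
`∑ₖ (xₖ(t + s) - xₖ(t) e^{2πi φₖ'(t) s})`, where `s = σ(t) u`; indeed the phase
`e^{2πi φₖ'(t) s}` merely translates the frequency in `ĝ`. Each summand is at most
`|Aₖ(t + s) - Aₖ(t)| + 2π Aₖ(t) |φₖ(t + s) - φₖ(t) - φₖ'(t) s| ≤ ε₁ |s| + π ε₂ Aₖ(t) s²`
by the mean value inequality and Taylor's inequality (`component_error`). Integrating against
`|g|` turns `|s|` and `s²` into `σ(t) I₁` and `σ(t)² I₂`. The Schwartz decay of `g` gives all the
integrability needed.
-/

open MeasureTheory Real Set Filter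
open scoped Topology Real

noncomputable section

/-- `e2πi θ = exp(2πiθ)`. -/
def e2πi (θ : ℝ) : ℂ := Complex.exp (2 * (π : ℂ) * (θ : ℂ) * Complex.I)

/-- Fourier transform with the convention `ŵ(ξ) = ∫ w(u) e^{-2πiξu} du`. -/
def ft (w : ℝ → ℂ) (ξ : ℝ) : ℂ := ∫ u : ℝ, w u * e2πi (-(ξ * u))

/-- The adaptive STFT with window `w` and time-varying parameter `σ`. -/
def adSTFT (σ : ℝ → ℝ) (w : ℝ → ℂ) (x : ℝ → ℂ) (t η : ℝ) : ℂ :=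
  ∫ τ : ℝ, x (t + τ) * ((σ t : ℂ))⁻¹ * w (τ / σ t) * e2πi (-(η * τ))

/-- Absolute moments `I_n = ∫ |τ^n w(τ)| dτ`. -/
def absMom (w : ℝ → ℂ) (n : ℕ) : ℝ := ∫ τ : ℝ, |τ| ^ n * ‖w τ‖

/-- The window `g₁(u) = u g(u)`. -/
def g1w (g : ℝ → ℂ) : ℝ → ℂ := fun u => (u : ℂ) * g u

/-- The window `g₂(u) = u² g(u)`. -/
def g2w (g : ℝ → ℂ) : ℝ → ℂ := fun u => (u : ℂ) ^ 2 * g u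

/-- The window `g₃(u) = u g'(u)`. -/
def g3w (g : ℝ → ℂ) : ℝ → ℂ := fun u => (u : ℂ) * deriv g u

/-- `∂_t` of the adaptive STFT. -/
def adSTFTt (σ : ℝ → ℝ) (w : ℝ → ℂ) (x : ℝ → ℂ) (t η : ℝ) : ℂ :=
  deriv (fun s => adSTFT σ w x s η) t

/-- `∂_η` of the adaptive STFT. -/
def adSTFTη (σ : ℝ → ℝ) (w : ℝ → ℂ) (x : ℝ → ℂ) (t η : ℝ) : ℂ :=
  deriv (fun η' => adSTFT σ w x t η') η

/-- The complex phase transformation `ω^{adp,c}` of the adaptive FSST. -/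
def omegaC (σ : ℝ → ℝ) (g x : ℝ → ℂ) (t η : ℝ) : ℂ :=
  adSTFTt σ g x t η / (2 * (π : ℂ) * Complex.I * adSTFT σ g x t η)
  + ((deriv σ t : ℝ) : ℂ) / (2 * (π : ℂ) * Complex.I * (σ t : ℂ))
  + ((deriv σ t / σ t : ℝ) : ℂ) * adSTFT σ (g3w g) x t η /
      (2 * (π : ℂ) * Complex.I * adSTFT σ g x t η)

/-- The (real) phase transformation `ω^{adp}` of the adaptive FSST. -/
def omegaAdp (σ : ℝ → ℝ) (g x : ℝ → ℂ) (t η : ℝ) : ℝ :=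
  (adSTFTt σ g x t η / (2 * (π : ℂ) * Complex.I * adSTFT σ g x t η)).re
  + (deriv σ t / σ t) *
      (adSTFT σ (g3w g) x t η / (2 * (π : ℂ) * Complex.I * adSTFT σ g x t η)).re

/-- The quantity `P₀(t,η)` of the second-order adaptive FSST. -/
def P0 (σ : ℝ → ℝ) (g x : ℝ → ℂ) (t η : ℝ) : ℂ :=
  (deriv (fun η' => adSTFTt σ g x t η' / adSTFT σ g x t η') η
    + ((deriv σ t / σ t : ℝ) : ℂ) *
        deriv (fun η' => adSTFT σ (g3w g) x t η' / adSTFT σ g x t η') η)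
  / deriv (fun η' => adSTFT σ (g1w g) x t η' / adSTFT σ g x t η') η

/-- The complex second-order phase transformation `ω^{adp,2nd,c}`. -/
def omega2C (σ : ℝ → ℝ) (g x : ℝ → ℂ) (t η : ℝ) : ℂ :=
  ((deriv σ t : ℝ) : ℂ) / (2 * (π : ℂ) * Complex.I * (σ t : ℂ))
  + adSTFTt σ g x t η / (2 * (π : ℂ) * Complex.I * adSTFT σ g x t η)
  - adSTFT σ (g1w g) x t η / (2 * (π : ℂ) * Complex.I * adSTFT σ g x t η) * P0 σ g x t η
  + ((deriv σ t / σ t : ℝ) : ℂ) * adSTFT σ (g3w g) x t η /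
      (2 * (π : ℂ) * Complex.I * adSTFT σ g x t η)

/-- The (real) second-order phase transformation `ω^{adp,2nd}`. -/
def omega2 (σ : ℝ → ℝ) (g x : ℝ → ℂ) (t η : ℝ) : ℝ := (omega2C σ g x t η).re

/-- The adaptive FSST `R^{adp,λ}_{x,γ}`. -/
def fsst (σ : ℝ → ℝ) (g x : ℝ → ℂ) (h : ℝ → ℝ) (γ lam t ξ : ℝ) : ℂ :=
  ∫ η in {η : ℝ | γ < ‖adSTFT σ g x t η‖},
    adSTFT σ g x t η * ((lam⁻¹ * h ((ξ - omegaAdp σ g x t η) / lam) : ℝ) : ℂ)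

/-- The second-order adaptive FSST `R^{adp,2nd,λ}_{x,γ₁,γ₂}`. -/
def fsst2 (σ : ℝ → ℝ) (g x : ℝ → ℂ) (h : ℝ → ℝ) (γ₁ γ₂ lam t ξ : ℝ) : ℂ :=
  ∫ η in {η : ℝ | γ₁ < ‖adSTFT σ g x t η‖ ∧
      γ₂ < ‖deriv (fun η' => adSTFT σ (g1w g) x t η' / adSTFT σ g x t η') η‖},
    adSTFT σ g x t η * ((lam⁻¹ * h ((ξ - omega2 σ g x t η) / lam) : ℝ) : ℂ)

/-- The chirp kernel `G^w_ℓ(t,η)` associated with linear phase `a` and chirp rate `b`. -/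
def chirpG (σ : ℝ → ℝ) (w : ℝ → ℂ) (a b : ℝ) (t η : ℝ) : ℂ :=
  ∫ τ : ℝ, e2πi (a * τ + b * τ ^ 2 / 2) * ((σ t : ℂ))⁻¹ * w (τ / σ t) * e2πi (-(η * τ))

/-- The Fourier transform of the chirped window `e^{iπru²} w(u)`. -/
def chirpFT (r : ℝ) (w : ℝ → ℂ) (ξ : ℝ) : ℂ :=
  ∫ u : ℝ, e2πi (r * u ^ 2 / 2) * w u * e2πi (-(ξ * u))

/-- The residual `err^w(t,η) = Ṽ^w_x(t,η) - Σ_ℓ x_ℓ(t) G^w_ℓ(t,η)`. -/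
def errW (σ : ℝ → ℝ) (w : ℝ → ℂ) (K : ℕ) (A φ : Fin K → ℝ → ℝ) (x : ℝ → ℂ)
    (t η : ℝ) : ℂ :=
  adSTFT σ w x t η - ∑ ℓ, (A ℓ t : ℂ) * e2πi (φ ℓ t) *
    chirpG σ w (deriv (φ ℓ) t) (deriv (deriv (φ ℓ)) t) t η

/-- The quantity `Err₁` of the second-order analysis. -/
def Err1 (σ : ℝ → ℝ) (g x : ℝ → ℂ) (K : ℕ) (A φ : Fin K → ℝ → ℝ) (k : Fin K)
    (t η : ℝ) : ℂ :=
  2 * (π : ℂ) * Complex.I *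
      (∑ ℓ ∈ Finset.univ.erase k, (A ℓ t : ℂ) * e2πi (φ ℓ t) *
        ((deriv (φ ℓ) t - deriv (φ k) t : ℝ) : ℂ) *
        chirpG σ g (deriv (φ ℓ) t) (deriv (deriv (φ ℓ)) t) t η)
  + 2 * (π : ℂ) * Complex.I * (σ t : ℂ) *
      (∑ ℓ ∈ Finset.univ.erase k, (A ℓ t : ℂ) * e2πi (φ ℓ t) *
        ((deriv (deriv (φ ℓ)) t - deriv (deriv (φ k)) t : ℝ) : ℂ) *
        chirpG σ (g1w g) (deriv (φ ℓ) t) (deriv (deriv (φ ℓ)) t) t η)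
  + 2 * (π : ℂ) * Complex.I * ((η - deriv (φ k) t : ℝ) : ℂ) * errW σ g K A φ x t η
  - errW σ (deriv g) K A φ x t η / (σ t : ℂ)
  - 2 * (π : ℂ) * Complex.I * ((deriv (deriv (φ k)) t : ℝ) : ℂ) * (σ t : ℂ) *
      errW σ (g1w g) K A φ x t η

/-- The quantity `Err₂` of the second-order analysis. -/
def Err2 (σ : ℝ → ℝ) (g x : ℝ → ℂ) (K : ℕ) (A φ : Fin K → ℝ → ℝ) (k : Fin K)
    (t η : ℝ) : ℂ :=
  4 * (π : ℂ) ^ 2 * (σ t : ℂ) *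
      (∑ ℓ ∈ Finset.univ.erase k, (A ℓ t : ℂ) * e2πi (φ ℓ t) *
        ((deriv (φ ℓ) t - deriv (φ k) t : ℝ) : ℂ) *
        chirpG σ (g1w g) (deriv (φ ℓ) t) (deriv (deriv (φ ℓ)) t) t η)
  + 4 * (π : ℂ) ^ 2 * (σ t : ℂ) ^ 2 *
      (∑ ℓ ∈ Finset.univ.erase k, (A ℓ t : ℂ) * e2πi (φ ℓ t) *
        ((deriv (deriv (φ ℓ)) t - deriv (deriv (φ k)) t : ℝ) : ℂ) *
        chirpG σ (g2w g) (deriv (φ ℓ) t) (deriv (deriv (φ ℓ)) t) t η)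
  + 2 * (π : ℂ) * Complex.I * errW σ g K A φ x t η
  + 4 * (π : ℂ) ^ 2 * ((η - deriv (φ k) t : ℝ) : ℂ) * (σ t : ℂ) * errW σ (g1w g) K A φ x t η
  + 2 * (π : ℂ) * Complex.I * errW σ (g3w g) K A φ x t η
  - 4 * (π : ℂ) ^ 2 * ((deriv (deriv (φ k)) t : ℝ) : ℂ) * (σ t : ℂ) ^ 2 *
      errW σ (g2w g) K A φ x t η

/-- The quantity `Err₃` of the second-order analysis. -/
def Err3 (σ : ℝ → ℝ) (g x : ℝ → ℂ) (K : ℕ) (A φ : Fin K → ℝ → ℝ) (k : Fin K)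
    (t η : ℝ) : ℂ :=
  (adSTFT σ g x t η * Err2 σ g x K A φ k t η
    - adSTFTη σ g x t η * Err1 σ g x K A φ k t η)
  / (adSTFT σ g x t η * adSTFTη σ (g1w g) x t η
    - adSTFT σ (g1w g) x t η * adSTFTη σ g x t η)

lemma e2πi_add (a b : ℝ) : e2πi (a + b) = e2πi a * e2πi b := by
  unfold e2πi
  rw [← Complex.exp_add]
  push_cast
  ring_nf

lemma norm_e2πi (a : ℝ) : ‖e2πi a‖ = 1 := by
  unfold e2πi
  have := Complex.norm_exp_ofReal_mul_I (2 * π * a)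
  push_cast at this
  exact this

@[fun_prop]
lemma continuous_e2πi : Continuous e2πi := by
  unfold e2πi
  fun_prop

lemma norm_e2πi_sub_le (a b : ℝ) : ‖e2πi a - e2πi b‖ ≤ 2 * π * |a - b| := by
  have h1 : e2πi a - e2πi b = e2πi b * (e2πi (a - b) - 1) := by
    rw [mul_sub, ← e2πi_add, mul_one]
    congr 2
    ring
  have h2 := Real.norm_exp_I_mul_ofReal_sub_one_le (x := 2 * π * (a - b))
  have h3 : Complex.exp (Complex.I * ((2 * π * (a - b) : ℝ) : ℂ)) = e2πi (a - b) := by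
    unfold e2πi
    push_cast
    ring_nf
  rw [h3] at h2
  rw [h1, norm_mul, norm_e2πi, one_mul]
  refine h2.trans (le_of_eq ?_)
  rw [Real.norm_eq_abs, abs_mul, abs_of_pos (by positivity)]

lemma abs_sub_le_of_deriv {f : ℝ → ℝ} {C : ℝ} (hf : Differentiable ℝ f)
    (hf' : ∀ s, |deriv f s| ≤ C) (t s : ℝ) : |f (t + s) - f t| ≤ C * |s| := by
  have := Convex.norm_image_sub_le_of_norm_deriv_le (f := f) (s := univ) (x := t) (y := t + s)
    (fun y _ => hf y) (fun y _ => hf' y) convex_univ (mem_univ _) (mem_univ _)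
  simpa using this

/-- Second-order Taylor inequality, with no sign condition on the increment `s`. -/
lemma abs_taylor_le {f : ℝ → ℝ} {C : ℝ} (hf : ContDiff ℝ 2 f)
    (hf' : ∀ s, |deriv (deriv f) s| ≤ C) (t s : ℝ) :
    |f (t + s) - f t - deriv f t * s| ≤ C * s ^ 2 / 2 := by
  have hd : Differentiable ℝ f := hf.differentiable (by norm_num)
  have hd' : Differentiable ℝ (deriv f) := by
    have : ContDiff ℝ (1 + 1) f := by simpa [one_add_one_eq_two] using hf
    exact ((contDiff_succ_iff_deriv.1 this).2.2).differentiable (by norm_num)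
  -- Compare `r ↦ f (t + r s) - f t - f' t r s` with `r ↦ C s² r² / 2` on `[0, 1]`.
  have hF : ∀ r : ℝ, HasDerivAt (fun r : ℝ => f (t + r * s) - f t - deriv f t * (r * s))
      (deriv f (t + r * s) * s - deriv f t * s) r := by
    intro r
    have h1 : HasDerivAt (fun r : ℝ => r * s) s r := by
      simpa using (hasDerivAt_id r).mul_const s
    have h2 : HasDerivAt (fun r : ℝ => t + r * s) s r := h1.const_add t
    exact ((((hd _).hasDerivAt).comp r h2).sub_const _).sub (h1.const_mul _)
  have hB : ∀ r : ℝ, HasDerivAt (fun r : ℝ => C * s ^ 2 / 2 * r ^ 2) (C * s ^ 2 * r) r := by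
    intro r
    convert! (hasDerivAt_pow 2 r).const_mul (C * s ^ 2 / 2) using 1
    push_cast
    ring
  have key := image_norm_le_of_norm_deriv_right_le_deriv_boundary (a := (0 : ℝ)) (b := 1)
    (f := fun r : ℝ => f (t + r * s) - f t - deriv f t * (r * s))
    (fun r _ => (hF r).continuousAt.continuousWithinAt)
    (fun r _ => (hF r).hasDerivWithinAt) (B := fun r : ℝ => C * s ^ 2 / 2 * r ^ 2)
    (by simp) hB (by
      intro r hr
      have h := abs_sub_le_of_deriv hd' hf' t (r * s)
      rw [← sub_mul, norm_mul, Real.norm_eq_abs, Real.norm_eq_abs]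
      calc |deriv f (t + r * s) - deriv f t| * |s| ≤ C * |r * s| * |s| := by gcongr
        _ = C * s ^ 2 * r := by
          rw [abs_mul, abs_of_nonneg hr.1, ← sq_abs s]
          ring)
    (right_mem_Icc.2 zero_le_one)
  simpa using key

/-- Error made by freezing the amplitude and linearizing the phase of one component. -/
lemma component_error {A φ : ℝ → ℝ} {ε₁ ε₂ : ℝ} (hA : ContDiff ℝ 1 A) (hφ : ContDiff ℝ 2 φ)
    (hApos : ∀ s, 0 < A s) (hA' : ∀ s, |deriv A s| ≤ ε₁)
    (hφ'' : ∀ s, |deriv (deriv φ) s| ≤ ε₂) (t s : ℝ) :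
    ‖(A (t + s) : ℂ) * e2πi (φ (t + s)) - (A t : ℂ) * e2πi (φ t) * e2πi (deriv φ t * s)‖
      ≤ ε₁ * |s| + π * ε₂ * A t * s ^ 2 := by
  have h1 := abs_sub_le_of_deriv (hA.differentiable (by norm_num)) hA' t s
  have h2 := abs_taylor_le hφ hφ'' t s
  have h3 : (A (t + s) : ℂ) * e2πi (φ (t + s)) - (A t : ℂ) * e2πi (φ t) * e2πi (deriv φ t * s)
      = ((A (t + s) - A t : ℝ) : ℂ) * e2πi (φ (t + s))
        + (A t : ℂ) * (e2πi (φ (t + s)) - e2πi (φ t + deriv φ t * s)) := by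
    rw [e2πi_add]
    push_cast
    ring
  have h4 := norm_e2πi_sub_le (φ (t + s)) (φ t + deriv φ t * s)
  rw [← sub_sub] at h4
  have hAt := hApos t
  rw [h3]
  refine (norm_add_le _ _).trans ?_
  rw [norm_mul, norm_mul, norm_e2πi, mul_one, Complex.norm_real, Complex.norm_real,
    Real.norm_eq_abs, Real.norm_eq_abs, abs_of_pos hAt]
  calc |A (t + s) - A t| + A t * ‖e2πi (φ (t + s)) - e2πi (φ t + deriv φ t * s)‖
      ≤ ε₁ * |s| + A t * (2 * π * (ε₂ * s ^ 2 / 2)) := by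
        gcongr
        exact h4.trans (by gcongr)
    _ = _ := by ring

/-- The adaptive STFT after the change of variables `τ = σ(t) u`. -/
lemma adSTFT_eq_rescaled (σ : ℝ → ℝ) (w x : ℝ → ℂ) (t η : ℝ) (hσ : 0 < σ t) :
    adSTFT σ w x t η = ∫ u : ℝ, x (t + σ t * u) * (w u * e2πi (-(η * (σ t * u)))) := by
  have h := Measure.integral_comp_mul_left
    (fun τ : ℝ => x (t + τ) * ((σ t : ℂ))⁻¹ * w (τ / σ t) * e2πi (-(η * τ))) (σ t)
  have hσ0 : (σ t : ℂ) ≠ 0 := by exact_mod_cast hσ.ne'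
  rw [abs_of_pos (inv_pos.2 hσ)] at h
  have h' : adSTFT σ w x t η = (σ t) • ∫ u : ℝ, x (t + σ t * u) * ((σ t : ℂ))⁻¹ *
      w (σ t * u / σ t) * e2πi (-(η * (σ t * u))) := by
    rw [h, smul_smul, mul_inv_cancel₀ hσ.ne', one_smul]
    rfl
  rw [h', ← integral_smul]
  congr 1
  funext u
  rw [mul_div_cancel_left₀ _ hσ.ne', Complex.real_smul]
  field_simp

theorem statement5
    (K : ℕ) (hK : 0 < K)
    (A φ : Fin K → ℝ → ℝ) (ε₁ ε₂ : ℝ) (hε₁ : 0 < ε₁) (hε₂pos : 0 < ε₂)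
    (hA1 : ∀ k, ContDiff ℝ 1 (A k))
    (hAbdd : ∀ k, ∃ C, ∀ s, |A k s| ≤ C)
    (hφ2 : ∀ k, ContDiff ℝ 2 (φ k))
    (hApos : ∀ k s, 0 < A k s)
    (hφ'bd : ∀ k, ∃ c C : ℝ, 0 < c ∧ (∀ s, c ≤ deriv (φ k) s) ∧ ∀ s, deriv (φ k) s ≤ C)
    (hA' : ∀ k s, |deriv (A k) s| ≤ ε₁)
    (hφ'' : ∀ k s, |deriv (deriv (φ k)) s| ≤ ε₂)
    (hsep : ∃ d, 0 < d ∧ ∀ (j : ℕ) (hj : j + 1 < K) (s : ℝ),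
      d ≤ deriv (φ ⟨j + 1, hj⟩) s - deriv (φ ⟨j, Nat.lt_of_succ_lt hj⟩) s)
    (g : SchwartzMap ℝ ℂ) (hg0 : g 0 ≠ 0)
    (σ : ℝ → ℝ) (hσ : ContDiff ℝ 1 σ) (hσpos : ∀ s, 0 < σ s)
    (x : ℝ → ℂ) (hx : ∀ s, x s = ∑ k, (A k s : ℂ) * e2πi (φ k s))
    (Λ₀ : ℝ → ℝ)
    (hΛ₀ : ∀ s, Λ₀ s = K * ε₁ * absMom (⇑g) 1 + π * ε₂ * absMom (⇑g) 2 * σ s * ∑ k, A k s) :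
    ∀ (t η : ℝ),
      ‖adSTFT σ (⇑g) x t η -
        ∑ k, (A k t : ℂ) * e2πi (φ k t) * ft (⇑g) (σ t * (η - deriv (φ k) t))‖
      ≤ σ t * Λ₀ t := by
  intro t η
  have hσt := hσpos t
  -- `G` is the modulated window; it is integrable and `‖G u‖ = ‖g u‖`.
  set G : ℝ → ℂ := fun u => g u * e2πi (-(η * (σ t * u))) with hG
  have hGnorm : ∀ u, ‖G u‖ = ‖g u‖ := fun u => by simp [hG, norm_e2πi]
  have hGcont : Continuous G := by
    have := g.continuous
    fun_prop
  have hGint : Integrable G :=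
    g.integrable.norm.mono' hGcont.aestronglyMeasurable
      (ae_of_all _ fun u => (hGnorm u).le)
  have hM : ∀ n : ℕ, Integrable fun u : ℝ => |u| ^ n * ‖g u‖ := fun n => by
    simpa using g.integrable_pow_mul volume n
  have hI1 : ∀ k, Integrable fun u : ℝ =>
      ((A k (t + σ t * u) : ℂ) * e2πi (φ k (t + σ t * u))) * G u := by
    intro k
    obtain ⟨C, hC⟩ := hAbdd k
    have hAc := (hA1 k).continuous
    have hφc := (hφ2 k).continuous
    refine hGint.bdd_mul (c := C) (by fun_prop) (ae_of_all _ fun u => ?_)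
    rw [norm_mul, norm_e2πi, mul_one, Complex.norm_real]
    exact hC _
  have hI2 : ∀ k, Integrable fun u : ℝ =>
      ((A k t : ℂ) * e2πi (φ k t) * e2πi (deriv (φ k) t * (σ t * u))) * G u := by
    intro k
    refine hGint.bdd_mul (c := |A k t|) (by fun_prop) (ae_of_all _ fun u => ?_)
    simp [norm_e2πi]
  have hft : ∀ k, (A k t : ℂ) * e2πi (φ k t) * ft (⇑g) (σ t * (η - deriv (φ k) t)) =
      ∫ u : ℝ, ((A k t : ℂ) * e2πi (φ k t) * e2πi (deriv (φ k) t * (σ t * u))) * G u := by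
    intro k
    rw [ft, ← integral_const_mul]
    congr 1
    funext u
    have : -(σ t * (η - deriv (φ k) t) * u)
        = deriv (φ k) t * (σ t * u) + -(η * (σ t * u)) := by ring
    rw [this, e2πi_add]
    simp only [hG]
    ring
  have hV : adSTFT σ (⇑g) x t η =
      ∑ k, ∫ u : ℝ, ((A k (t + σ t * u) : ℂ) * e2πi (φ k (t + σ t * u))) * G u := by
    rw [adSTFT_eq_rescaled σ _ _ t η hσt, ← integral_finsetSum _ fun k _ => hI1 k]
    congr 1
    funext u
    rw [hx, Finset.sum_mul]
  rw [hV, Finset.sum_congr rfl fun k _ => hft k, ← Finset.sum_sub_distrib]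
  have hk : ∀ k, ‖(∫ u : ℝ, ((A k (t + σ t * u) : ℂ) * e2πi (φ k (t + σ t * u))) * G u) -
      ∫ u : ℝ, ((A k t : ℂ) * e2πi (φ k t) * e2πi (deriv (φ k) t * (σ t * u))) * G u‖
      ≤ ε₁ * σ t * absMom (⇑g) 1 + π * ε₂ * A k t * σ t ^ 2 * absMom (⇑g) 2 := by
    intro k
    rw [← integral_sub (hI1 k) (hI2 k), absMom, absMom, ← integral_const_mul,
      ← integral_const_mul, ← integral_add ((hM 1).const_mul _) ((hM 2).const_mul _)]
    refine norm_integral_le_of_norm_le (((hM 1).const_mul _).add ((hM 2).const_mul _))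
      (ae_of_all _ fun u => ?_)
    have h := component_error (hA1 k) (hφ2 k) (hApos k) (hA' k) (hφ'' k) t (σ t * u)
    rw [← sub_mul, norm_mul, hGnorm]
    refine (mul_le_mul_of_nonneg_right h (norm_nonneg _)).trans (le_of_eq ?_)
    rw [abs_mul, abs_of_pos hσt, ← sq_abs, abs_mul, abs_of_pos hσt]
    ring
  refine (norm_sum_le_of_le _ fun k _ => hk k).trans (le_of_eq ?_)
  rw [Finset.sum_add_distrib, Finset.sum_const, Finset.card_univ, Fintype.card_fin,
    ← Finset.sum_mul, ← Finset.sum_mul, ← Finset.mul_sum, hΛ₀, nsmul_eq_mul]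
  ring


end
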